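/- arXiv:1306.6057 — 2 statements merged into one kernel-verified Lean document; each statement's English description precedes it below -/
import Mathlib

section
/- For coprime positive integers p, q with q ≡ 0 (mod 4), the classical Gauss sum g₁(p,q) = Σ_{h mod q} e^{2πi p h²/q} equals (1+i)·ε_p^{-1}·(q/p)·√q, where (q/p) is the Jacobi symbol and ε_p = 1 if p ≡ 1 (mod 4) and ε_p = i if p ≡ 3 (mod 4). -/
open Complex Real

open Filter Topology in
lemma gq_theta_tendsto {ι : Type*} {l : Filter ι} (b : ι → ℂ)
    (hb : Tendsto (fun i => (b i).re) l atTop) (t : ℝ) :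
    Tendsto (fun i => ∑' n : ℤ, cexp (-π * b i * (n:ℂ)^2 + 2 * π * I * t * n)) l (𝓝 1) := by
  have hs : Summable (fun n : ℤ => ‖cexp (-π * (1:ℂ) * (n:ℂ)^2)‖) := by
    have := ((summable_jacobiTheta₂_term_iff 0 I).mpr (by simp)).norm
    refine this.congr (fun n => ?_)
    unfold jacobiTheta₂_term
    congr 2
    linear_combination (π * (n:ℂ)^2) * I_sq
  have h1 : (1:ℂ) = ∑' n : ℤ, if n = 0 then 1 else 0 := by simp
  rw [h1]
  have hnorm : ∀ (z : ℂ) (n : ℤ), ‖cexp (-π * z * (n:ℂ)^2 + 2 * π * I * t * n)‖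
      = Real.exp (-π * z.re * (n:ℝ)^2) := by
    intro z n
    rw [Complex.norm_exp]
    congr 1
    have : (-π * z * (n:ℂ)^2 + 2 * π * I * t * n) =
      ((-π * (n:ℝ)^2 : ℝ) : ℂ) * z + ((2 * π * t * n : ℝ) : ℂ) * I := by push_cast; ring
    rw [this, add_re, re_ofReal_mul, re_ofReal_mul]
    simp; ring
  refine tendsto_tsum_of_dominated_convergence hs ?_ ?_
  · intro n
    by_cases hn : n = 0
    · simpa [hn] using tendsto_const_nhds
    · rw [if_neg hn, tendsto_zero_iff_norm_tendsto_zero]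
      simp_rw [hnorm]
      refine Real.tendsto_exp_atBot.comp ?_
      have hn' : (0:ℝ) < (n:ℝ)^2 := by positivity
      have := hb.const_mul_atTop_of_neg (r := -(π * (n:ℝ)^2)) (by have := pi_pos; nlinarith)
      refine this.congr (fun i => by ring)
  · filter_upwards [hb.eventually_ge_atTop 1] with i hi n
    rw [hnorm]
    have := hnorm 1 n
    have h2 : ‖cexp (-π * (1:ℂ) * (n:ℂ)^2)‖ = Real.exp (-π * (1:ℝ) * (n:ℝ)^2) := by
      rw [Complex.norm_exp]; congr 1
      have : (-π * (1:ℂ) * (n:ℂ)^2) = ((-π * (1:ℝ) * (n:ℝ)^2 : ℝ) : ℂ) := by push_cast; ring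
      rw [this, ofReal_re]
    rw [h2]
    apply Real.exp_le_exp.mpr
    have : 0 ≤ π * (n:ℝ)^2 := by positivity
    nlinarith

lemma gq_cpow_mul {r : ℝ} (hr : 0 < r) {z : ℂ} (hz : z ≠ 0) (s : ℂ) :
    ((r:ℂ) * z) ^ s = (r:ℂ)^s * z^s := by
  rw [cpow_def_of_ne_zero (mul_ne_zero (by exact_mod_cast hr.ne') hz), cpow_def_of_ne_zero hz,
    cpow_def_of_ne_zero (by exact_mod_cast hr.ne'), Complex.log_ofReal_mul hr hz, ← Complex.exp_add,
    Complex.ofReal_log hr.le]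
  ring_nf

lemma gq_sqrt_half {r : ℝ} (hr : 0 ≤ r) : (r:ℂ) ^ (1/2:ℂ) = (Real.sqrt r : ℂ) := by
  rw [Real.sqrt_eq_rpow, Complex.ofReal_cpow hr]; norm_num

lemma gq_inner (N : ℕ) (hN : 0 < N) (h : ℂ) {a : ℂ} (ha : 0 < a.re) :
    a ^ (1/2:ℂ) * ∑' k : ℤ, cexp (-π * a * (k * N + h)^2) =
      1 / N * ∑' n : ℤ, cexp (-π * (a⁻¹ / N^2) * (n:ℂ)^2 + 2 * π * I * (h / N) * n) := by
  have hN' : (N:ℂ) ≠ 0 := by exact_mod_cast hN.ne'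
  have ha0 : a ≠ 0 := by rintro rfl; simp at ha
  have hpos : (0:ℝ) < (N:ℝ)^2 := by positivity
  have e : ∀ k : ℤ, cexp (-π * a * (k * N + h)^2) = cexp (-π * a * h^2) *
      cexp (-π * (((N:ℝ)^2 : ℝ) * a) * (k:ℂ) ^ 2 + 2 * π * (-a * h * N) * k) := by
    intro k; rw [← Complex.exp_add]; congr 1; push_cast; ring
  simp_rw [e]
  rw [tsum_mul_left, Complex.tsum_exp_neg_quadratic (by rw [re_ofReal_mul]; positivity),
    gq_cpow_mul hpos ha0, gq_sqrt_half hpos.le, Real.sqrt_sq (by positivity)]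
  have hc : a ^ (1/2:ℂ) ≠ 0 := by simp [cpow_eq_zero_iff, ha0]
  have e2 : ∀ n : ℤ, cexp (-π * (a⁻¹ / N^2) * (n:ℂ)^2 + 2 * π * I * (h / N) * n) =
      cexp (-π * a * h^2) * cexp (-π / (((N:ℝ)^2 : ℝ) * a) * (n + I * (-a * h * N)) ^ 2) := by
    intro n; rw [← Complex.exp_add]; congr 1; push_cast; field_simp
    ring_nf; rw [I_sq]; ring
  simp_rw [e2]
  rw [tsum_mul_left]
  push_cast
  field_simp

lemma gq_summable {a : ℂ} (ha : 0 < a.re) (c : ℤ → ℂ) (hc : ∀ n, ‖c n‖ = 1) :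
    Summable (fun n : ℤ => c n * cexp (-π * a * (n:ℂ)^2)) := by
  have := ((summable_jacobiTheta₂_term_iff 0 (I * a)).mpr (by simpa using ha)).norm
  refine Summable.of_norm (this.congr (fun n => ?_))
  unfold jacobiTheta₂_term
  rw [norm_mul, hc, one_mul]
  congr 2
  linear_combination (π * (n:ℂ)^2 * a) * I_sq

open Filter Topology in
lemma gq_asymp {ι : Type*} {l : Filter ι} (a : ι → ℂ) (hap : ∀ᶠ i in l, 0 < (a i).re)
    (ha : Tendsto (fun i => ((a i)⁻¹).re) l atTop) (N : ℕ) (hN : 0 < N) (c : ℤ → ℂ)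
    (hc1 : ∀ n, ‖c n‖ = 1) (hc : ∀ n k : ℤ, c (k * N + n) = c n) :
    Tendsto (fun i => (a i)^(1/2:ℂ) * ∑' n : ℤ, c n * cexp (-π * a i * (n:ℂ)^2)) l
      (𝓝 (1 / N * ∑ h ∈ Finset.range N, c h)) := by
  have : NeZero N := ⟨hN.ne'⟩
  have key : ∀ᶠ i in l, (1 / N * ∑ h ∈ Finset.range N, c h *
      ∑' n : ℤ, cexp (-π * ((a i)⁻¹ / N^2) * (n:ℂ)^2 + 2 * π * I * ((h / N : ℝ):ℂ) * n)) =
      (a i)^(1/2:ℂ) * ∑' n : ℤ, c n * cexp (-π * a i * (n:ℂ)^2) := by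
    filter_upwards [hap] with i hi
    have hs := gq_summable hi c hc1
    rw [← (Int.divModEquiv N).symm.tsum_eq, ← (Equiv.prodComm _ _).tsum_eq]
    have hs2 := ((Equiv.prodComm _ _).trans (Int.divModEquiv N).symm).summable_iff.mpr hs
    rw [Summable.tsum_prod (by exact hs2), tsum_fintype, Finset.mul_sum, Finset.mul_sum,
      ← Fin.sum_univ_eq_sum_range (fun h => (1 / (N:ℂ) * (c h *
      ∑' n : ℤ, cexp (-π * ((a i)⁻¹ / N^2) * (n:ℂ)^2 + 2 * π * I * ((h / N : ℝ):ℂ) * n))))]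
    refine Finset.sum_congr rfl (fun h _ => ?_)
    have := gq_inner N hN (h:ℕ) hi
    simp only [Equiv.prodComm_apply, Prod.swap_prod_mk, Int.divModEquiv_symm_apply, hc]
    rw [tsum_mul_left]
    push_cast
    linear_combination (-c h) * this
  refine Tendsto.congr' key ?_
  refine Tendsto.const_mul _ (tendsto_finsetSum _ (fun h _ => ?_))
  rw [show 𝓝 (c h) = 𝓝 (c h * 1) by rw [mul_one]]
  refine Tendsto.const_mul _ (gq_theta_tendsto _ ?_ _)
  have hpos : (0:ℝ) < ((N:ℝ)^2)⁻¹ := by positivity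
  refine (ha.const_mul_atTop hpos).congr (fun i => ?_)
  rw [← re_ofReal_mul]; congr 1; push_cast; ring

/-- Quadratic Gauss sum with integer parameter. -/
noncomputable def gqG (a : ℤ) (n : ℕ) : ℂ :=
  ∑ h ∈ Finset.range n, cexp (2 * π * I * a * (h:ℂ)^2 / n)

lemma gq_char_norm (a : ℤ) (N : ℕ) (n : ℤ) : ‖cexp (2 * π * I * a * (n:ℂ)^2 / N)‖ = 1 := by
  have : (2 * π * I * a * (n:ℂ)^2 / N) = ((2 * π * a * (n:ℝ)^2 / N : ℝ) : ℂ) * I := by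
    push_cast; ring
  rw [this, Complex.norm_exp_ofReal_mul_I]

lemma gq_char_per (a : ℤ) (N : ℕ) (hN : 0 < N) (n k : ℤ) :
    cexp (2 * π * I * a * ((k * N + n : ℤ):ℂ)^2 / N) = cexp (2 * π * I * a * (n:ℂ)^2 / N) := by
  have hN' : (N:ℂ) ≠ 0 := by exact_mod_cast hN.ne'
  rw [Complex.exp_eq_exp_iff_exists_int]
  refine ⟨a * (k^2 * N + 2 * k * n), ?_⟩
  push_cast; field_simp; ring

lemma gq_sqrt_negI : (-I : ℂ) ^ (1/2:ℂ) = (1 - I) / (Real.sqrt 2 : ℂ) := by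
  rw [cpow_def_of_ne_zero (by simp), Complex.log_neg_I,
    show (-(π/2) * I * (1/2) : ℂ) = ((-(π/4) : ℝ) : ℂ) * I by push_cast; ring,
    Complex.exp_mul_I, ← Complex.ofReal_cos, ← Complex.ofReal_sin, Real.cos_neg, Real.sin_neg,
    Real.cos_pi_div_four, Real.sin_pi_div_four]
  have h2 : ((Real.sqrt 2 : ℝ) : ℂ) ^ 2 = 2 := by
    rw [← ofReal_pow, Real.sq_sqrt (by norm_num)]; norm_num
  have h0 : ((Real.sqrt 2 : ℝ) : ℂ) ≠ 0 := by
    intro h; rw [h] at h2; norm_num at h2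
  push_cast
  field_simp
  rw [h2]; ring

open Filter Topology in
lemma gq_recip (p m : ℕ) (hp : 0 < p) (hm : 0 < m) :
    gqG p (4 * m) = (1 + I) * ((Real.sqrt (4 * m) : ℝ) / (Real.sqrt p : ℝ) : ℂ) * gqG (-m) p := by
  have hpC : (p:ℂ) ≠ 0 := by exact_mod_cast hp.ne'
  have hmC : (m:ℂ) ≠ 0 := by exact_mod_cast hm.ne'
  obtain ⟨x, hx⟩ : ∃ x : ℝ, x = p / (2 * m) := ⟨_, rfl⟩
  have hx0 : 0 < x := by rw [hx]; positivity
  have hxC : (x:ℂ) ≠ 0 := by exact_mod_cast hx0.ne'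
  have hxC' : (x:ℂ) = p / (2 * m) := by rw [hx]; push_cast; rfl
  let c : ℤ → ℂ := fun n => cexp (2 * π * I * (p:ℤ) * (n:ℂ)^2 / (4 * m : ℕ))
  let c' : ℤ → ℂ := fun n => cexp (2 * π * I * (-m : ℤ) * (n:ℂ)^2 / p)
  let A : ℝ → ℂ := fun ε => ε - I * x
  let w : ℝ → ℂ := fun ε => x^2 + I * x * ε
  let a' : ℝ → ℂ := fun ε => ε * (w ε)⁻¹
  have hpos : ∀ᶠ ε : ℝ in 𝓝[>] 0, 0 < ε := self_mem_nhdsWithin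
  have hcont : ∀ {f : ℝ → ℂ}, Continuous f → Tendsto f (𝓝[>] 0) (𝓝 (f 0)) :=
    fun hf => (hf.tendsto 0).mono_left nhdsWithin_le_nhds
  have hwre : ∀ ε, (w ε).re = x^2 := by intro ε; simp [w, ← ofReal_pow]
  have hw0 : ∀ ε, w ε ≠ 0 := by
    intro ε h; have := hwre ε; rw [h, zero_re] at this; exact (pow_pos hx0 2).ne this
  have hAim : ∀ ε, (A ε).im = -x := by intro ε; simp [A]
  have hA0 : ∀ ε, A ε ≠ 0 := by
    intro ε h; have := hAim ε; rw [h] at this; simp at this; exact hx0.ne' this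
  have hAre : ∀ ε, (A ε).re = ε := by intro ε; simp [A]
  have T1 := gq_asymp (l := 𝓝[>] (0:ℝ)) (fun ε => (ε:ℂ)) (by simpa using hpos)
    (by simpa [← ofReal_inv] using tendsto_inv_nhdsGT_zero) (4 * m) (by omega) c
    (fun n => gq_char_norm _ _ _) (fun n k => gq_char_per _ _ (by omega) _ _)
  have T2 := gq_asymp (l := 𝓝[>] (0:ℝ)) a'
    (by
      filter_upwards [hpos] with ε hε
      simp only [a']
      rw [re_ofReal_mul, inv_re, hwre]
      have := normSq_pos.mpr (hw0 ε)
      positivity)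
    (by
      have : Tendsto (fun ε : ℝ => x^2 * ε⁻¹) (𝓝[>] 0) atTop :=
        tendsto_inv_nhdsGT_zero.const_mul_atTop (by positivity)
      refine this.congr (fun ε => ?_)
      simp only [a', mul_inv, inv_inv]
      rw [← ofReal_inv, re_ofReal_mul, hwre]; ring) p hp c'
    (fun n => gq_char_norm _ _ _) (fun n k => gq_char_per _ _ hp _ _)
  have hwinv : Tendsto (fun ε => (A ε ^ (1/2:ℂ))⁻¹ * (((w ε)⁻¹)^(1/2:ℂ))⁻¹) (𝓝[>] 0)
      (𝓝 ((A 0 ^ (1/2:ℂ))⁻¹ * (((w 0)⁻¹)^(1/2:ℂ))⁻¹)) := by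
    have t1 : Tendsto A (𝓝[>] 0) (𝓝 (A 0)) := hcont (by fun_prop)
    have t2 : Tendsto w (𝓝[>] 0) (𝓝 (w 0)) := hcont (by fun_prop)
    refine Tendsto.mul (Tendsto.inv₀ ((continuousAt_cpow_const ?_).tendsto.comp t1) ?_)
      (Tendsto.inv₀ ((continuousAt_cpow_const ?_).tendsto.comp (t2.inv₀ (hw0 0))) ?_)
    · right; rw [hAim]; exact (neg_neg_of_pos hx0).ne
    · simp [cpow_eq_zero_iff, hA0]
    · left; rw [inv_re, hwre]
      have := normSq_pos.mpr (hw0 0)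
      positivity
    · simp [cpow_eq_zero_iff, hw0]
  have T3 := hwinv.mul T2
  have heq : (fun ε : ℝ => (ε:ℂ)^(1/2:ℂ) * ∑' n : ℤ, c n * cexp (-π * ε * (n:ℂ)^2)) =ᶠ[𝓝[>] 0]
      fun ε => ((A ε ^ (1/2:ℂ))⁻¹ * (((w ε)⁻¹)^(1/2:ℂ))⁻¹) *
        ((a' ε)^(1/2:ℂ) * ∑' n : ℤ, c' n * cexp (-π * a' ε * (n:ℂ)^2)) := by
    filter_upwards [hpos] with ε hε
    have e1 : ∀ n : ℤ, c n * cexp (-π * ε * (n:ℂ)^2) = cexp (-π * A ε * (n:ℂ)^2) := by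
      intro n
      simp only [c, A]
      rw [← Complex.exp_add, hxC']; congr 1; push_cast; field_simp; ring
    have e2 : ∀ n : ℤ, c' n * cexp (-π * a' ε * (n:ℂ)^2) = cexp (-π / A ε * (n:ℂ)^2) := by
      intro n
      simp only [c', a']
      have hh : (A ε)⁻¹ = I / x + ε * (w ε)⁻¹ := by
        have h1 := hA0 ε
        have h2 := hw0 ε
        have h3 : w ε = I * x * A ε := by simp only [w, A]; linear_combination (x^2 : ℂ) * I_sq
        rw [h3]
        have := I_ne_zero
        have h5 : I * x * A ε ≠ 0 := mul_ne_zero (mul_ne_zero this hxC) h1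
        have h6 : (ε:ℂ) = A ε + I * x := by simp only [A]; ring
        have h7 : (I * x * A ε)⁻¹ = -I * (x:ℂ)⁻¹ * (A ε)⁻¹ := by rw [mul_inv, mul_inv, inv_I]
        rw [h7, h6]
        have h8 := mul_inv_cancel₀ h1
        have h9 := mul_inv_cancel₀ hxC
        linear_combination (I * (x:ℂ)⁻¹) * h8 + ((A ε)⁻¹ * (I * I)) * h9 + (A ε)⁻¹ * I_sq
      rw [div_eq_mul_inv (-(π:ℂ)) (A ε), hh, ← Complex.exp_add, hxC']; congr 1; push_cast; field_simp; ring
    simp_rw [e1, e2]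
    rw [Complex.tsum_exp_neg_mul_int_sq (by rw [hAre]; exact hε)]
    simp only [a']
    rw [gq_cpow_mul hε (inv_ne_zero (hw0 ε))]
    have : ((w ε)⁻¹)^(1/2:ℂ) ≠ 0 := by simp [cpow_eq_zero_iff, hw0]
    generalize ((w ε)⁻¹)^(1/2:ℂ) = W at *
    field_simp
  have hlim := tendsto_nhds_unique (T1.congr' heq) T3
  have hA : A 0 ^ (1/2:ℂ) = Real.sqrt x * ((1 - I) / (Real.sqrt 2 : ℂ)) := by
    have : A 0 = x * (-I) := by simp [A]; ring
    rw [this, gq_cpow_mul hx0 (by simp), gq_sqrt_half hx0.le, gq_sqrt_negI]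
  have hw : ((w 0)⁻¹)^(1/2:ℂ) = (x:ℂ)⁻¹ := by
    have : (w 0)⁻¹ = (((x⁻¹)^2 : ℝ) : ℂ) := by simp [w]
    rw [this, gq_sqrt_half (by positivity), Real.sqrt_sq (by positivity)]; push_cast; rfl
  rw [hA, hw] at hlim
  have g1 : ∑ h ∈ Finset.range (4 * m), c h = gqG p (4 * m) := by
    simp [gqG, c]
  have g2 : ∑ h ∈ Finset.range p, c' h = gqG (-m) p := by
    simp [gqG, c']
  rw [g1, g2] at hlim
  have hsx : Real.sqrt x = Real.sqrt p / (Real.sqrt 2 * Real.sqrt m) := by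
    rw [hx, Real.sqrt_div (by positivity), Real.sqrt_mul (by positivity)]
  have hs4 : Real.sqrt (4 * m) = 2 * Real.sqrt m := by
    rw [Real.sqrt_mul (by norm_num), show (4:ℝ) = 2^2 by norm_num, Real.sqrt_sq (by norm_num)]
  have q1 : ((Real.sqrt p : ℝ):ℂ)^2 = p := by
    rw [← ofReal_pow, Real.sq_sqrt (by positivity)]; simp
  have q2 : ((Real.sqrt m : ℝ):ℂ)^2 = m := by
    rw [← ofReal_pow, Real.sq_sqrt (by positivity)]; simp
  have q3 : ((Real.sqrt 2 : ℝ):ℂ)^2 = 2 := by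
    rw [← ofReal_pow, Real.sq_sqrt (by positivity)]; simp
  have n1 : ((Real.sqrt p : ℝ):ℂ) ≠ 0 := by intro h; rw [h] at q1; simp at q1; exact hpC q1.symm
  have n2 : ((Real.sqrt m : ℝ):ℂ) ≠ 0 := by intro h; rw [h] at q2; simp at q2; exact hmC q2.symm
  have n3 : ((Real.sqrt 2 : ℝ):ℂ) ≠ 0 := by intro h; rw [h] at q3; simp at q3
  have n4 : (1 - I : ℂ) ≠ 0 := by
    intro h; have := congrArg Complex.re h; simp at this
  rw [hsx, hxC'] at hlim
  rw [hs4]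
  push_cast at hlim ⊢
  have hinv : (1 - I : ℂ)⁻¹ = (1 + I) / 2 := by
    rw [inv_eq_iff_eq_inv, eq_comm, inv_eq_of_mul_eq_one_right]
    linear_combination (-1/2 : ℂ) * I_sq
  have hG : gqG p (4 * m) = (4 * m) * (1 / (4 * m) * gqG p (4 * m)) := by field_simp
  rw [hG, hlim, mul_inv, inv_div, inv_div, div_eq_mul_inv _ (1 - I), hinv]
  field_simp
  rw [q3]; ring

lemma gqG_congr {a b : ℤ} {n : ℕ} (hn : 0 < n) (h : (n:ℤ) ∣ a - b) : gqG a n = gqG b n := by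
  obtain ⟨k, hk⟩ := h
  have hn' : (n:ℂ) ≠ 0 := by exact_mod_cast hn.ne'
  have ha : a = b + n * k := by omega
  refine Finset.sum_congr rfl (fun h _ => ?_)
  rw [Complex.exp_eq_exp_iff_exists_int]
  refine ⟨k * h^2, ?_⟩
  rw [ha]; push_cast; field_simp

lemma gqG_neg (a : ℤ) (n : ℕ) : gqG (-a) n = (starRingEnd ℂ) (gqG a n) := by
  unfold gqG
  rw [map_sum]
  refine Finset.sum_congr rfl (fun h _ => ?_)
  rw [← Complex.exp_conj]
  congr 1
  simp only [map_div₀, map_mul, map_pow, conj_I, conj_ofReal, map_natCast, map_intCast,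
    Complex.conj_ofNat]
  push_cast; ring

/-- The factor `ε_p`. -/
noncomputable def gqE (p : ℕ) : ℂ := if p % 4 = 1 then 1 else I

/-- The evaluation for odd modulus. -/
def gqH (m : ℤ) (p : ℕ) : Prop := gqG m p = (jacobiSym m p : ℂ) * gqE p * (Real.sqrt p : ℝ)

lemma gqE_conj (p : ℕ) : (starRingEnd ℂ) (gqE p) = (gqE p)⁻¹ := by
  unfold gqE; split_ifs <;> simp

lemma gqE_congr {p r : ℕ} (h : p % 4 = r % 4) : gqE p = gqE r := by
  unfold gqE; rw [h]

/-- Step from odd modulus to modulus divisible by four. -/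
lemma gq_step (p m : ℕ) (hp : 0 < p) (hm : 0 < m) :
    gqH m p ↔ gqG p (4 * m) =
      (1 + I) * (gqE p)⁻¹ * (jacobiSym m p : ℂ) * (Real.sqrt (4 * m) : ℝ) := by
  have hR := gq_recip p m hp hm
  rw [gqG_neg] at hR
  have n1 : ((Real.sqrt p : ℝ):ℂ) ≠ 0 := by
    rw [ofReal_ne_zero]; positivity
  have n2 : ((Real.sqrt (4 * m) : ℝ):ℂ) ≠ 0 := by
    rw [ofReal_ne_zero]; positivity
  have n3 : (1 + I : ℂ) ≠ 0 := by
    intro h; have := congrArg Complex.re h; simp at this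
  have hconj : gqH m p ↔ (starRingEnd ℂ) (gqG m p) =
      (jacobiSym m p : ℂ) * (gqE p)⁻¹ * (Real.sqrt p : ℝ) := by
    unfold gqH
    rw [← (starRingEnd ℂ).injective.eq_iff]
    simp only [map_mul, conj_ofReal, map_intCast, gqE_conj]
  rw [hconj, hR]
  constructor
  · intro h; rw [h]; field_simp
  · intro h
    apply mul_left_cancel₀ (mul_ne_zero n3 (div_ne_zero n2 n1))
    rw [h]; field_simp

lemma gq_jac_refl (a b : ℕ) (ha : 0 < a) (hb : b < 4 * a) (hodd : Odd b) (hco : Nat.Coprime a b) :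
    jacobiSym a (4 * a - b) = jacobiSym a b := by
  obtain ⟨c, hc⟩ : ∃ c, c = 4 * a - b := ⟨_, rfl⟩
  have hcb : c + b = 4 * a := by omega
  rw [← hc]
  have hb0 : b ≠ 0 := by rintro rfl; simp at hodd
  have hc0 : c ≠ 0 := by omega
  have hoc : Odd c := by
    obtain ⟨k, hk⟩ := hodd; exact ⟨2 * a - k - 1, by omega⟩
  have hoa : Odd (4 * a - 1) := ⟨2 * a - 1, by omega⟩
  have hsq : (jacobiSym a b) ^ 2 = 1 := jacobiSym.sq_one (by simpa using hco)
  have h1 : jacobiSym a (4 * a - 1) = 1 := by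
    have h4 : jacobiSym 4 (4 * a - 1) = 1 := jacobiSym.at_four hoa
    have : jacobiSym (4 * a) (4 * a - 1) = 1 := by
      rw [jacobiSym.mod_left' (a₂ := 1), jacobiSym.one_left]
      refine Int.ModEq.symm ((Int.modEq_iff_dvd).mpr ⟨1, ?_⟩)
      omega
    rwa [jacobiSym.mul_left, h4, one_mul] at this
  have hmod : (b * c) % (4 * a) = ((4 * a - 1) * (b * b)) % (4 * a) := by
    have : b * c + b * b = b * (4 * a) := by rw [← hcb]; ring
    have h2 : (4 * a - 1) * (b * b) + b * b = (b * b) * (4 * a) := by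
      obtain ⟨t, ht⟩ : ∃ t, 4 * a = t + 1 := ⟨4 * a - 1, by omega⟩
      rw [ht]; simp; ring
    have : b * c ≡ (4 * a - 1) * (b * b) [MOD 4 * a] := by
      apply Nat.ModEq.add_right_cancel' (b * b)
      rw [this, h2]
      exact (Nat.modEq_zero_iff_dvd.mpr (Dvd.intro_left _ rfl)).trans
        (Nat.modEq_zero_iff_dvd.mpr (Dvd.intro_left _ rfl)).symm
    exact this
  have h2 : jacobiSym a (b * c) = jacobiSym a ((4 * a - 1) * (b * b)) := by
    rw [jacobiSym.mod_right' a (hodd.mul hoc), hmod,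
      ← jacobiSym.mod_right' a (hoa.mul (hodd.mul hodd))]
  rw [jacobiSym.mul_right' _ hb0 hc0, jacobiSym.mul_right' _ (by omega) (by positivity),
    jacobiSym.mul_right' _ hb0 hb0, h1] at h2
  linear_combination (jacobiSym a b) * h2 + (jacobiSym a b - jacobiSym a c) * hsq

lemma gqH_neg {m : ℤ} {p : ℕ} (hp : Odd p) (h : gqH m p) : gqH (-m) p := by
  unfold gqH at *
  rw [gqG_neg, h, jacobiSym.neg _ hp]
  simp only [map_mul, conj_ofReal, map_intCast, gqE_conj]
  rcases Nat.odd_mod_four_iff.mp (Nat.odd_iff.mp hp) with h1 | h1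
  · rw [ZMod.χ₄_nat_one_mod_four h1]; simp [gqE, h1]
  · rw [ZMod.χ₄_nat_three_mod_four h1]; simp [gqE, h1]

lemma gqH_congr {a b : ℤ} {p : ℕ} (hp : 0 < p) (hd : (p:ℤ) ∣ a - b) (h : gqH b p) : gqH a p := by
  unfold gqH at *
  rw [gqG_congr hp hd, h, jacobiSym.mod_left' (Int.ModEq.symm ((Int.modEq_iff_dvd).mpr hd))]

lemma gqH_small (p : ℕ) (hodd : Odd p)
    (ih : ∀ r < p, Odd r → ∀ m : ℤ, IsCoprime m (r:ℤ) → gqH m r)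
    (m : ℕ) (hm : 0 < m) (hmp : 2 * m < p) (hco : Nat.Coprime m p) : gqH m p := by
  have hp0 : 0 < p := hodd.pos
  rw [gq_step p m hp0 hm]
  obtain ⟨r, hr⟩ : ∃ r, r = p % (4 * m) := ⟨_, rfl⟩
  have hdm : 4 * m * (p / (4 * m)) + r = p := by rw [hr]; exact Nat.div_add_mod _ _
  have hr4 : r < 4 * m := by rw [hr]; exact Nat.mod_lt _ (by omega)
  have hrm : r % 4 = p % 4 := by rw [hr]; exact Nat.mod_mod_of_dvd _ ⟨m, rfl⟩
  have hrodd : Odd r := by rw [Nat.odd_iff] at *; omega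
  have hcr : Nat.Coprime m r := by
    have : Nat.Coprime m (r + m * (4 * (p / (4 * m)))) := by
      convert hco using 1; linarith
    simpa using this
  have hJ : jacobiSym m p = jacobiSym m r := by rw [jacobiSym.mod_right' m hodd, ← hr]
  have hG : gqG p (4 * m) = gqG r (4 * m) := by
    apply gqG_congr (by omega)
    refine ⟨(p / (4 * m) : ℕ), ?_⟩
    have : (p:ℤ) = ((4 * m : ℕ):ℤ) * ((p / (4 * m) : ℕ):ℤ) + r := by
      exact_mod_cast hdm.symm
    linarith
  rw [hJ, hG, gqE_congr hrm.symm]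
  by_cases hlt : r < 2 * m
  · exact (gq_step r m hrodd.pos hm).mp (ih r (by omega) hrodd _ (Nat.isCoprime_iff_coprime.mpr hcr))
  · obtain ⟨s, hs⟩ : ∃ s, s = 4 * m - r := ⟨_, rfl⟩
    have hsodd : Odd s := by rw [Nat.odd_iff] at *; omega
    have hcs : Nat.Coprime m s := by
      rw [← Nat.isCoprime_iff_coprime] at hcr ⊢
      have : (s:ℤ) = 4 * m + -(r:ℤ) := by omega
      rw [this]
      exact (IsCoprime.mul_add_right_right_iff).mpr hcr.neg_right
    have h1 := (gq_step s m hsodd.pos hm).mp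
      (ih s (by rw [Nat.odd_iff] at *; omega) hsodd _ (Nat.isCoprime_iff_coprime.mpr hcs))
    have hG2 : gqG r (4 * m) = gqG (-(s:ℤ)) (4 * m) := by
      apply gqG_congr (by omega)
      exact ⟨1, by omega⟩
    have hJ2 : jacobiSym m s = jacobiSym m r := by
      rw [hs]; exact gq_jac_refl m r hm hr4 hrodd hcr
    rw [hG2, gqG_neg, h1, hJ2]
    simp only [map_mul, conj_ofReal, map_intCast, map_inv₀, gqE_conj, map_add, map_one, conj_I,
      inv_inv]
    have : (1 + -I) * gqE s = (1 + I) * (gqE r)⁻¹ := by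
      unfold gqE
      rcases Nat.odd_mod_four_iff.mp (Nat.odd_iff.mp hrodd) with h1 | h1
      · rw [if_neg (by omega), if_pos h1]
        linear_combination (-1 : ℂ) * I_sq
      · rw [if_pos (by omega), if_neg (by omega), inv_I]
        linear_combination I_sq
    rw [this]

lemma gqH_all (p : ℕ) : Odd p → ∀ m : ℤ, IsCoprime m (p:ℤ) → gqH m p := by
  induction p using Nat.strong_induction_on with
  | _ p ih =>
    intro hodd m hco
    have hp0 : 0 < p := hodd.pos
    by_cases hp1 : p = 1
    · subst hp1; simp [gqH, gqG, gqE]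
    have hp3 : 3 ≤ p := by rw [Nat.odd_iff] at hodd; omega
    have small := gqH_small p hodd ih
    obtain ⟨k, hk⟩ : ∃ k, k = m / p := ⟨_, rfl⟩
    obtain ⟨t, ht⟩ : ∃ t : ℕ, (t:ℤ) = m % p :=
      ⟨(m % p).toNat, Int.toNat_of_nonneg (Int.emod_nonneg _ (by omega))⟩
    have hmt : m = k * p + t := by rw [hk, ht]; exact (Int.ediv_mul_add_emod _ _).symm
    have htp : t < p := by
      have := Int.emod_lt_of_pos m (b := p) (by omega)
      omega
    have hct : IsCoprime (t:ℤ) (p:ℤ) := by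
      rw [hmt] at hco
      exact (IsCoprime.mul_add_right_left_iff).mp hco
    have ht0 : 0 < t := by
      rcases Nat.eq_zero_or_pos t with h | h
      · subst h
        rw [Nat.isCoprime_iff_coprime] at hct
        simp at hct; omega
      · exact h
    by_cases hs : 2 * t < p
    · exact gqH_congr hp0 ⟨k, by rw [hmt]; ring⟩
        (small t ht0 hs (Nat.isCoprime_iff_coprime.mp hct))
    · obtain ⟨u, hu⟩ : ∃ u, u = p - t := ⟨_, rfl⟩
      have hcu : IsCoprime (u:ℤ) (p:ℤ) := by
        have : (u:ℤ) = 1 * p + -(t:ℤ) := by omega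
        rw [this]
        exact (IsCoprime.mul_add_right_left_iff).mpr hct.neg_left
      refine gqH_congr (b := -(u:ℤ)) hp0 ⟨k + 1, ?_⟩
        (gqH_neg hodd (small u (by omega) (by rw [Nat.odd_iff] at hodd; omega)
          (Nat.isCoprime_iff_coprime.mp hcu)))
      have : (u:ℤ) = p - t := by omega
      rw [hmt, this]; ring

/-- Gauss sum evaluation for `q ≡ 0 mod 4`. -/
theorem gauss_sum_q_cong_zero_mod_four (p q : ℕ) (hp : 0 < p) (hq : 0 < q)
    (hco : Nat.Coprime p q) (h4 : q % 4 = 0) :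
    ∑ h ∈ Finset.range q, Complex.exp (2 * π * I * p * h ^ 2 / q)
      = (1 + I) * (if p % 4 = 1 then (1 : ℂ) else I)⁻¹ * (jacobiSym q p : ℂ)
        * (Real.sqrt q : ℂ) := by
  obtain ⟨m, rfl⟩ : ∃ m, q = 4 * m := ⟨q / 4, by omega⟩
  have hm : 0 < m := by omega
  have hcm : Nat.Coprime m p := (Nat.Coprime.coprime_mul_left_right hco).symm
  have hodd : Odd p := by
    have : Nat.Coprime p 2 := Nat.Coprime.coprime_dvd_right ⟨2 * m, by ring⟩ hco
    exact Nat.coprime_two_right.mp this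
  have h := (gq_step p m hp hm).mp (gqH_all p hodd m (Nat.isCoprime_iff_coprime.mpr hcm))
  have hJ : jacobiSym ((4 * m : ℕ) : ℤ) p = jacobiSym m p := by
    push_cast
    rw [jacobiSym.mul_left, jacobiSym.at_four hodd, one_mul]
  rw [hJ]
  unfold gqG gqE at h
  push_cast at h ⊢
  exact h
end

section
/- For coprime positive integers p, q with q odd, the classical Gauss sum g₁(p,q) = Σ_{h mod q} e^{2πi p h²/q} equals ε_q·(p/q)·√q, where (p/q) is the Jacobi symbol and ε_q = 1 if q ≡ 1 (mod 4) and ε_q = i if q ≡ 3 (mod 4). -/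
open Complex Real
open Filter Topology

lemma theta_tendsto_one {α : Type*} {l : Filter α} [l.IsCountablyGenerated] (x : ℝ) (f : α → ℂ)
    (hf : Tendsto (fun a => (f a).im) l atTop) :
    Tendsto (fun a => jacobiTheta₂ (x : ℂ) (f a)) l (𝓝 1) := by
  have key : Tendsto (fun a => ∑' n : ℤ, jacobiTheta₂_term n (x : ℂ) (f a)) l
      (𝓝 (∑' n : ℤ, if n = 0 then (1 : ℂ) else 0)) := by
    have hs := summable_pow_mul_jacobiTheta₂_term_bound 0 (T := 1) one_pos 0
    simp only [pow_zero, one_mul, mul_zero, zero_mul, sub_zero] at hs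
    refine tendsto_tsum_of_dominated_convergence hs ?_ ?_
    · intro n
      split_ifs with h
      · subst h
        simpa [jacobiTheta₂_term] using tendsto_const_nhds
      · rw [tendsto_zero_iff_norm_tendsto_zero]
        simp only [norm_jacobiTheta₂_term, ofReal_im, mul_zero, sub_zero]
        refine Real.tendsto_exp_atBot.comp ?_
        have hn : (0:ℝ) < (n:ℝ)^2 := by positivity
        refine Tendsto.const_mul_atTop_of_neg ?_ hf
        nlinarith [Real.pi_pos]
    · filter_upwards [hf.eventually_ge_atTop 1] with a ha n
      have := norm_jacobiTheta₂_term_le (S := 0) (T := 1) one_pos (z := (x:ℂ)) (τ := f a) (by simp) ha n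
      simpa using this
  simpa [jacobiTheta₂] using key

lemma theta_split (N : ℕ) (hN : 0 < N) (x : ℝ) (w : ℂ) (hw : 0 < w.re)
    (hc : ∀ (m : ℤ) (r : ℕ), cexp (π * I * ((m * N + r : ℤ) : ℂ) ^ 2 * x) = cexp (π * I * (r : ℂ) ^ 2 * x)) :
    jacobiTheta₂ 0 (x + I * w) = 1 / (w * N ^ 2) ^ (1 / 2 : ℂ) *
      ∑ r ∈ Finset.range N, cexp (π * I * (r : ℂ) ^ 2 * x) *
        jacobiTheta₂ ((r / N : ℝ) : ℂ) (I / (N ^ 2 * w)) := by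
  have : NeZero N := ⟨hN.ne'⟩
  have hw0 : w ≠ 0 := by rintro rfl; simp at hw
  have hN0 : (N : ℂ) ≠ 0 := by exact_mod_cast hN.ne'
  have hsum := (summable_jacobiTheta₂_term_iff 0 (x + I * w)).2 (by simpa using hw)
  have h1 : jacobiTheta₂ 0 (x + I * w) = ∑ r : Fin N, ∑' m : ℤ,
      jacobiTheta₂_term (m * N + (r : ℕ)) 0 (x + I * w) := by
    rw [jacobiTheta₂, ← (Int.divModEquiv N).symm.tsum_eq]
    have hs2 := (Int.divModEquiv N).symm.summable_iff.2 hsum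
    have hs3 := (Equiv.prodComm (Fin N) ℤ).summable_iff.2 hs2
    rw [← (Equiv.prodComm (Fin N) ℤ).tsum_eq]
    have := hs3.tsum_prod
    simp only [Function.comp_def] at this
    rw [this, tsum_fintype]
    rfl
  rw [h1, Finset.mul_sum, Finset.sum_range]
  refine Finset.sum_congr rfl fun r _ => ?_
  have h2 : ∀ m : ℤ, jacobiTheta₂_term (m * N + (r : ℕ)) 0 (x + I * w) =
      cexp (π * I * ((r:ℕ) : ℂ) ^ 2 * x) * cexp (-π * w * ((r:ℕ):ℂ)^2) *
        jacobiTheta₂_term m (I * w * N * (r:ℕ)) (I * w * N ^ 2) := by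
    intro m
    rw [← hc m r, jacobiTheta₂_term, jacobiTheta₂_term, ← Complex.exp_add, ← Complex.exp_add]
    congr 1
    push_cast
    ring_nf
    simp only [I_sq]
    ring
  simp_rw [h2]
  rw [tsum_mul_left]
  change _ * jacobiTheta₂ _ _ = _
  rw [jacobiTheta₂_functional_equation]
  have e1 : -I * (I * w * N ^ 2) = w * N ^ 2 := by
    linear_combination (-w * N ^ 2) * I_sq
  have e2 : I * w * N * (r:ℕ) / (I * w * N ^ 2) = (((r:ℕ) / N : ℝ) : ℂ) := by
    push_cast; field_simp
  have e3 : -1 / (I * w * N ^ 2) = I / (N ^ 2 * w) := by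
    field_simp; simp
  have e4 : -π * I * (I * w * N * (r:ℕ)) ^ 2 / (I * w * N ^ 2) = - (-π * w * ((r:ℕ):ℂ)^2) := by
    field_simp; simp
  rw [e1, e2, e3, e4, Complex.exp_neg]
  have := Complex.exp_ne_zero (-π * w * ((r:ℕ):ℂ)^2)
  field_simp

lemma real_mul_cpow (a : ℝ) (ha : 0 < a) (z : ℂ) (hz : z ≠ 0) (s : ℂ) :
   ((a:ℂ) * z) ^ s = (a:ℂ) ^ s * z ^ s := by
  rw [cpow_def_of_ne_zero (mul_ne_zero (by exact_mod_cast ha.ne') hz), cpow_def_of_ne_zero (by exact_mod_cast ha.ne'),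
    cpow_def_of_ne_zero hz, Complex.log_ofReal_mul ha hz, ← Complex.exp_add, Complex.ofReal_log ha.le]
  ring_nf

lemma real_cpow_half (a : ℝ) (ha : 0 ≤ a) : (a:ℂ) ^ (1/2 : ℂ) = (√a : ℝ) := by
  rw [Real.sqrt_eq_rpow, Complex.ofReal_cpow ha]; norm_num

lemma exp_congr (n : ℕ) (hn : 0 < n) (x y : ℤ) (h : x ≡ y [ZMOD n]) :
    cexp (2 * π * I * x / n) = cexp (2 * π * I * y / n) := by
  rw [Complex.exp_eq_exp_iff_exists_int]
  obtain ⟨k, hk⟩ := h.symm.dvd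
  have hn0 : (n : ℂ) ≠ 0 := by exact_mod_cast hn.ne'
  refine ⟨k, ?_⟩
  have : (x : ℂ) = y + n * k := by
    have : x = y + n * k := by linarith
    rw [this]; push_cast; ring
  rw [this]; field_simp

noncomputable def gG (p : ℤ) (q : ℕ) : ℂ :=
  ∑ h ∈ Finset.range q, cexp (2 * π * I * ((p * h ^ 2 : ℤ) : ℂ) / q)

noncomputable def ep (q : ℕ) : ℂ := if q % 4 = 1 then (1 : ℂ) else I

lemma gG_congr (q : ℕ) (a b : ℤ) (h : a ≡ b [ZMOD q]) : gG a q = gG b q := by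
  rcases Nat.eq_zero_or_pos q with rfl | hq
  · simp [gG]
  · exact Finset.sum_congr rfl fun x _ => exp_congr q hq _ _ (h.mul_right _)

lemma gG_neg (q : ℕ) (a : ℤ) : gG (-a) q = (starRingEnd ℂ) (gG a q) := by
  rw [gG, gG, map_sum]
  refine Finset.sum_congr rfl fun x _ => ?_
  rw [← Complex.exp_conj]
  congr 1
  simp [map_ofNat]

lemma gG_mul (p q : ℕ) (hp : 0 < p) (hq : 0 < q) (h : Nat.Coprime p q) :
    gG p q * gG q p = gG 1 (p * q) := by
  have hp0 : (p : ℂ) ≠ 0 := by exact_mod_cast hp.ne'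
  have hq0 : (q : ℂ) ≠ 0 := by exact_mod_cast hq.ne'
  rw [gG, gG, gG, Finset.sum_mul_sum, ← Finset.sum_product']
  have hmaps : Set.MapsTo (fun x : ℕ × ℕ => (x.1 * p + x.2 * q) % (p * q))
      (Finset.range q ×ˢ Finset.range p : Finset (ℕ × ℕ)) (Finset.range (p * q)) := by
    intro x _
    simpa using Nat.mod_lt _ (by positivity)
  have hinj : Set.InjOn (fun x : ℕ × ℕ => (x.1 * p + x.2 * q) % (p * q))
      (Finset.range q ×ˢ Finset.range p : Finset (ℕ × ℕ)) := by
    rintro ⟨a, b⟩ hab ⟨c, d⟩ hcd (heq : _ ≡ _ [MOD _])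
    simp only [Finset.coe_product, Finset.coe_range, Set.mem_prod, Set.mem_Iio] at hab hcd
    have e1 : a * p ≡ c * p [MOD q] := by
      have := heq.of_mul_left p
      simpa [Nat.ModEq] using this
    have e2 : b * q ≡ d * q [MOD p] := by
      have := heq.of_mul_right q
      simpa [Nat.ModEq] using this
    have f1 := Nat.ModEq.cancel_right_of_coprime h.symm e1
    have f2 := Nat.ModEq.cancel_right_of_coprime h e2
    rw [Nat.ModEq, Nat.mod_eq_of_lt hab.1, Nat.mod_eq_of_lt hcd.1] at f1
    rw [Nat.ModEq, Nat.mod_eq_of_lt hab.2, Nat.mod_eq_of_lt hcd.2] at f2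
    rw [f1, f2]
  refine Finset.sum_nbij _ hmaps hinj
    (Finset.surjOn_of_injOn_of_card_le _ hmaps hinj (by simp [mul_comm])) ?_
  rintro ⟨a, b⟩ _
  have : (1 * (((a * p + b * q) % (p * q) : ℕ) : ℤ) ^ 2) ≡ (a * p) ^ 2 + (b * q) ^ 2
      [ZMOD ((p * q : ℕ) : ℤ)] := by
    have h1 : (((a * p + b * q) % (p * q) : ℕ) : ℤ) ≡ a * p + b * q [ZMOD ((p * q : ℕ) : ℤ)] := by
      push_cast
      exact Int.mod_modEq _ _
    rw [one_mul]
    refine (h1.pow 2).trans ?_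
    refine (Int.modEq_iff_dvd.2 ⟨-2 * a * b, ?_⟩)
    push_cast
    ring
  rw [exp_congr _ (by positivity) _ _ this, ← Complex.exp_add]
  congr 1
  push_cast
  field_simp

lemma cpow_neg_I_half : (-I) ^ (1 / 2 : ℂ) = (1 - I) / (√2 : ℝ) := by
  rw [cpow_def_of_ne_zero (by simp), Complex.log_neg_I]
  have : -(π / 2 : ℂ) * I * (1 / 2) = ((-(π / 4) : ℝ) : ℂ) * I := by push_cast; ring
  rw [this, Complex.exp_mul_I, ← Complex.ofReal_cos, ← Complex.ofReal_sin, Real.cos_neg,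
    Real.sin_neg, Real.cos_pi_div_four, Real.sin_pi_div_four]
  have h2 : ((√2 : ℝ) : ℂ) * (√2 : ℝ) = 2 := by
    rw [← Complex.ofReal_mul, Real.mul_self_sqrt (by norm_num)]; norm_num
  have h0 : ((√2 : ℝ) : ℂ) ≠ 0 := by
    intro h; rw [h] at h2; norm_num at h2
  push_cast
  field_simp
  linear_combination (1 - I) * h2

lemma exp_half (q : ℕ) (hodd : q % 2 = 1) :
    1 + cexp (π * I * (-(q / 2 : ℝ) : ℝ)) = if q % 4 = 1 then 1 - I else 1 + I := by
  have h : cexp (π * I * (-(q / 2 : ℝ) : ℝ)) = (-I) ^ q := by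
    rw [← Complex.exp_neg_pi_div_two_mul_I, ← Complex.exp_nat_mul]
    congr 1
    push_cast; ring
  rw [h]
  have h4 : (-I) ^ 4 = 1 := by
    have : (-I) ^ 4 = (I ^ 2) ^ 2 := by ring
    rw [this, I_sq]; norm_num
  rw [← Nat.div_add_mod q 4, pow_add, pow_mul, h4, one_pow, one_mul]
  have : q % 4 = 1 ∨ q % 4 = 3 := by omega
  rcases this with h | h
  · simp [h, Nat.add_mod, sub_eq_add_neg]
  · have h3 : (-I) ^ 3 = I := by
      have : (-I) ^ 3 = - (I ^ 2) * I := by ring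
      rw [this, I_sq]; ring
    simp [h, Nat.add_mod, h3]

lemma theta_identity (q : ℕ) (hq : 0 < q) (hodd : q % 2 = 1) (t : ℝ) (ht : 0 < t) :
    ∑ r ∈ Finset.range q, cexp (π * I * (r : ℂ) ^ 2 * (2 / q : ℝ)) *
        jacobiTheta₂ ((r / q : ℝ) : ℂ) (I / (q ^ 2 * t)) =
    (√(q / 2 : ℝ) : ℝ) / ((-I * ((2 / q : ℝ) + I * t)) ^ (1 / 2 : ℂ) *
       (((2 / q : ℝ) + I * t)⁻¹) ^ (1 / 2 : ℂ)) *
     ∑ r ∈ Finset.range 2, cexp (π * I * (r : ℂ) ^ 2 * (-(q / 2 : ℝ) : ℝ)) *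
        jacobiTheta₂ ((r / (2 : ℕ) : ℝ) : ℂ)
          (I / ((2 : ℕ) ^ 2 * (q * t / (2 * ((2 / q : ℝ) + I * t))))) := by
  have hq' : (0 : ℝ) < q := by exact_mod_cast hq
  have hqc : (q : ℂ) ≠ 0 := by exact_mod_cast hq.ne'
  have htc : (t : ℂ) ≠ 0 := by exact_mod_cast ht.ne'
  have h1 := theta_split q hq (2 / q) t (by simpa using ht) (by
    intro m r
    have := exp_congr q hq ((m * q + r : ℤ) ^ 2) (r ^ 2)
      (Int.modEq_iff_dvd.2 ⟨-(m * (m * q + 2 * r)), by ring⟩)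
    convert this using 2
    · push_cast; ring
    · push_cast; ring)
  set τ : ℂ := (2 / q : ℝ) + I * t with hτ
  have hτre : τ.re = 2 / q := by simp [hτ]
  have hτ0 : τ ≠ 0 := by
    intro h
    rw [h] at hτre
    have : (0 : ℝ) < 2 / q := by positivity
    rw [Complex.zero_re] at hτre
    linarith
  have hw : 0 < ((q : ℂ) * t / (2 * τ)).re := by
    have : (q : ℂ) * t / (2 * τ) = ((q * t / 2 : ℝ) : ℂ) * τ⁻¹ := by
      push_cast; field_simp
    rw [this, Complex.re_ofReal_mul, Complex.inv_re, hτre]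
    have := Complex.normSq_pos.2 hτ0
    positivity
  have h2 := theta_split 2 two_pos (-(q / 2 : ℝ)) (q * t / (2 * τ)) hw (by
    intro m r
    rw [Complex.exp_eq_exp_iff_exists_int]
    refine ⟨-(m * (m + r)) * q, ?_⟩
    push_cast
    ring)
  have e : ((-(q / 2 : ℝ) : ℝ) : ℂ) + I * (q * t / (2 * τ)) = -1 / τ := by
    have : τ * q = 2 + I * t * q := by
      rw [hτ]; push_cast; field_simp
    push_cast
    field_simp
    linear_combination -this
  rw [e] at h2
  have h3 := jacobiTheta₂_functional_equation 0 τ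
  rw [zero_div, h2, h1] at h3
  simp only [ne_eq, OfNat.ofNat_ne_zero, not_false_eq_true, zero_pow, mul_zero, zero_div,
    Complex.exp_zero, mul_one] at h3
  have e5 : (t : ℂ) * q ^ 2 = ((t * q ^ 2 : ℝ) : ℂ) := by push_cast; ring
  have e6 : (q : ℂ) * t / (2 * τ) * (2 : ℕ) ^ 2 = ((2 * q * t : ℝ) : ℂ) * τ⁻¹ := by
    push_cast; field_simp
    try ring
  rw [e6, real_mul_cpow _ (by positivity) _ (inv_ne_zero hτ0), e5, real_cpow_half _ (by positivity),
    real_cpow_half _ (by positivity)] at h3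
  have e7 : √(t * q ^ 2) = √(q / 2) * √(2 * q * t) := by
    rw [← Real.sqrt_mul (by positivity)]; congr 1; ring
  have n1 : ((√(t * q ^ 2) : ℝ) : ℂ) ≠ 0 := by
    have : 0 < √(t * q ^ 2) := Real.sqrt_pos.2 (by positivity)
    exact_mod_cast this.ne'
  have n2 : ((√(2 * q * t) : ℝ) : ℂ) ≠ 0 := by
    have : 0 < √(2 * q * t) := Real.sqrt_pos.2 (by positivity)
    exact_mod_cast this.ne'
  rw [one_div_mul_eq_div, div_eq_iff n1] at h3
  rw [h3, e7, Complex.ofReal_mul]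
  generalize ∑ r ∈ Finset.range 2, cexp (π * I * (r : ℂ) ^ 2 * (-(q / 2 : ℝ) : ℝ)) *
        jacobiTheta₂ ((r / (2 : ℕ) : ℝ) : ℂ)
          (I / ((2 : ℕ) ^ 2 * (q * t / (2 * τ)))) = S
  generalize (τ⁻¹) ^ (1 / 2 : ℂ) = b
  generalize (-I * τ) ^ (1 / 2 : ℂ) = a
  generalize ((√(2 * q * t) : ℝ) : ℂ) = s at n2
  generalize ((√(q / 2) : ℝ) : ℂ) = u
  field_simp

lemma gG_one (q : ℕ) (hq : 0 < q) (hodd : q % 2 = 1) : gG 1 q = ep q * (√q : ℝ) := by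
  have hq' : (0 : ℝ) < q := by exact_mod_cast hq
  have hqc : (q : ℂ) ≠ 0 := by exact_mod_cast hq.ne'
  have hinv : Tendsto (fun t : ℝ => t⁻¹ * ((q : ℝ) ^ 2)⁻¹) (𝓝[>] 0) atTop :=
    tendsto_inv_nhdsGT_zero.atTop_mul_const (by positivity)
  have hL : Tendsto (fun t : ℝ => ∑ r ∈ Finset.range q, cexp (π * I * (r : ℂ) ^ 2 * (2 / q : ℝ)) *
        jacobiTheta₂ ((r / q : ℝ) : ℂ) (I / (q ^ 2 * t))) (𝓝[>] 0) (𝓝 (gG 1 q)) := by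
    have : gG 1 q = ∑ r ∈ Finset.range q, cexp (π * I * (r : ℂ) ^ 2 * (2 / q : ℝ)) * 1 := by
      refine Finset.sum_congr rfl fun r _ => ?_
      rw [mul_one]; congr 1; push_cast; ring
    rw [this]
    refine tendsto_finsetSum _ fun r _ => Tendsto.const_mul _ (theta_tendsto_one _ _ ?_)
    refine hinv.congr fun t => ?_
    have : I / ((q : ℂ) ^ 2 * t) = ((t⁻¹ * ((q : ℝ) ^ 2)⁻¹ : ℝ) : ℂ) * I := by
      push_cast; rw [div_eq_mul_inv, mul_inv]; ring
    rw [this, Complex.im_ofReal_mul]; simp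
  have hτ : Tendsto (fun t : ℝ => ((2 / q : ℝ) : ℂ) + I * t) (𝓝[>] 0) (𝓝 ((2 / q : ℝ) : ℂ)) := by
    have : Continuous (fun t : ℝ => ((2 / q : ℝ) : ℂ) + I * t) := by fun_prop
    have := this.tendsto 0
    simp only [ofReal_zero, mul_zero, add_zero] at this
    exact this.mono_left nhdsWithin_le_nhds
  have hB : Tendsto (fun t : ℝ => ∑ r ∈ Finset.range 2, cexp (π * I * (r : ℂ) ^ 2 * (-(q / 2 : ℝ) : ℝ)) *
        jacobiTheta₂ ((r / (2 : ℕ) : ℝ) : ℂ)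
          (I / ((2 : ℕ) ^ 2 * (q * t / (2 * ((2 / q : ℝ) + I * t)))))) (𝓝[>] 0)
      (𝓝 (∑ r ∈ Finset.range 2, cexp (π * I * (r : ℂ) ^ 2 * (-(q / 2 : ℝ) : ℝ)) * 1)) := by
    refine tendsto_finsetSum _ fun r _ => Tendsto.const_mul _ (theta_tendsto_one _ _ ?_)
    refine hinv.congr' ?_
    filter_upwards [self_mem_nhdsWithin] with t ht
    have ht : 0 < t := ht
    have htc : (t : ℂ) ≠ 0 := by exact_mod_cast ht.ne'
    have : I / (((2 : ℕ) : ℂ) ^ 2 * (q * t / (2 * ((2 / q : ℝ) + I * t)))) =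
      ((1 / (2 * q * t) : ℝ) : ℂ) * (I * ((2 / q : ℝ) + I * t)) := by
      push_cast
      rw [div_eq_mul_inv I, mul_inv, inv_div]
      field_simp
      try ring
    rw [this, Complex.im_ofReal_mul]
    simp
    field_simp
  have hpos : (0 : ℝ) < 2 / q := by positivity
  have hC : Tendsto (fun t : ℝ => ((√(q / 2 : ℝ) : ℝ) : ℂ) / ((-I * ((2 / q : ℝ) + I * t)) ^ (1 / 2 : ℂ) *
       (((2 / q : ℝ) + I * t)⁻¹) ^ (1 / 2 : ℂ))) (𝓝[>] 0) (𝓝 (((√(q / 2 : ℝ) : ℝ) : ℂ) /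
         ((-I * ((2 / q : ℝ))) ^ (1 / 2 : ℂ) * (((2 / q : ℝ) : ℂ)⁻¹) ^ (1 / 2 : ℂ)))) := by
    have h0 : ((2 / q : ℝ) : ℂ) ≠ 0 := by exact_mod_cast hpos.ne'
    refine Tendsto.div tendsto_const_nhds (Tendsto.mul ?_ ?_) ?_
    · refine (continuousAt_cpow_const (Or.inr ?_)).tendsto.comp (hτ.const_mul (-I))
      rw [mul_comm, Complex.im_ofReal_mul]
      simp [hq.ne']
    · refine (continuousAt_cpow_const (Or.inl ?_)).tendsto.comp (hτ.inv₀ h0)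
      rw [← Complex.ofReal_inv, Complex.ofReal_re]
      positivity
    · refine mul_ne_zero ?_ ?_
      · simp [Complex.cpow_eq_zero_iff, hq.ne']
      · simp [Complex.cpow_eq_zero_iff, hq.ne']
  have hR := hC.mul hB
  have heq := tendsto_nhds_unique_of_eventuallyEq hL hR (by
    filter_upwards [self_mem_nhdsWithin] with t ht
    exact theta_identity q hq hodd t ht)
  rw [heq, Finset.sum_range_succ, Finset.sum_range_one]
  have h12 : (√(2 / q : ℝ)) * √(q / 2 : ℝ) = 1 := by
    rw [← Real.sqrt_mul (by positivity)]
    have : (2 / q : ℝ) * (q / 2) = 1 := by field_simp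
    rw [this, Real.sqrt_one]
  have h12c : ((√(2 / q : ℝ) : ℝ) : ℂ) * (√(q / 2 : ℝ) : ℝ) = 1 := by exact_mod_cast h12
  have hs : √(q : ℝ) = √(q / 2 : ℝ) * √2 := by
    rw [← Real.sqrt_mul (by positivity)]; congr 1; ring
  have hinv2 : ((2 / q : ℝ) : ℂ)⁻¹ = ((q / 2 : ℝ) : ℂ) := by push_cast; field_simp
  have hbe := exp_half q hodd
  simp only [Nat.cast_zero, Nat.cast_one, ne_eq, OfNat.ofNat_ne_zero, not_false_eq_true, zero_pow,
    mul_zero, zero_mul, Complex.exp_zero, mul_one, one_pow]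
  rw [hbe, hinv2, mul_comm (-I), real_mul_cpow _ hpos _ (by simp), real_cpow_half _ hpos.le,
    real_cpow_half _ (by positivity), cpow_neg_I_half, hs]
  have hden : ((√(2 / q : ℝ) : ℝ) : ℂ) * ((1 - I) / (√2 : ℝ)) * (√(q / 2 : ℝ) : ℝ) =
      (1 - I) / (√2 : ℝ) := by
    linear_combination ((1 - I) / (√2 : ℝ)) * h12c
  rw [hden]
  have hI : (1 - I) ≠ 0 := by
    intro h
    have := congrArg Complex.re h
    simp at this
  rw [ep]
  push_cast
  split_ifs
  · field_simp
  · field_simp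
    linear_combination ((√(q / 2 : ℝ) : ℝ) : ℂ) * I_sq

lemma gG_nat (q r : ℕ) (hq : q % 2 = 1) (hr : r % 2 = 1) (h : Nat.Coprime r q)
    (ih : gG q r = ep r * (jacobiSym q r : ℂ) * (√r : ℝ)) :
    gG r q = ep q * (jacobiSym r q : ℂ) * (√q : ℝ) := by
  have hm := gG_mul r q (by omega) (by omega) h
  rw [gG_one (r * q) (Nat.mul_pos (by omega) (by omega)) (by simp [Nat.mul_mod, hq, hr]), ih] at hm
  have hs : √((r * q : ℕ) : ℝ) = √r * √q := by
    push_cast; rw [Real.sqrt_mul (by positivity)]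
  have hr0 : ((√r : ℝ) : ℂ) ≠ 0 := by
    have : (0 : ℝ) < r := by exact_mod_cast (by omega : 0 < r)
    exact_mod_cast (Real.sqrt_pos.2 this).ne'
  rw [hs, ← jacobiSym.quadratic_reciprocity_if hq hr] at hm
  have hj : jacobiSym r q = 1 ∨ jacobiSym r q = -1 :=
    jacobiSym.eq_one_or_neg_one (by simpa using h)
  have hq4 : q % 4 = 1 ∨ q % 4 = 3 := by omega
  have hr4 : r % 4 = 1 ∨ r % 4 = 3 := by omega
  have hI := I_sq
  have hIne := I_ne_zero
  apply mul_right_cancel₀ hr0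
  rw [Complex.ofReal_mul] at hm
  generalize gG r q = g at hm ⊢
  generalize ((√r : ℝ) : ℂ) = a at hm ⊢
  generalize ((√q : ℝ) : ℂ) = b at hm ⊢
  rcases hq4 with h1 | h1 <;> rcases hr4 with h2 | h2 <;> rcases hj with h3 | h3 <;>
    simp [ep, h1, h2, h3, Nat.mul_mod, -mul_eq_mul_right_iff, -mul_eq_mul_left_iff] at hm ⊢
  all_goals first
    | linear_combination hm
    | linear_combination -hm
    | linear_combination (-I) * hm + (g * a - a * b) * I_sq
    | linear_combination I * hm + (g * a + a * b) * I_sq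
    | linear_combination I * hm + g * a * I_sq
    | linear_combination (-I) * hm + g * a * I_sq

lemma gG_eq (q : ℕ) : ∀ (p : ℤ), q % 2 = 1 → p.gcd q = 1 →
    gG p q = ep q * (jacobiSym p q : ℂ) * (√q : ℝ) := by
  induction q using Nat.strong_induction_on with
  | _ q ih =>
  intro p hodd hco
  rcases (by omega : q = 1 ∨ 1 < q) with rfl | hq1
  · simp [gG, ep]
  have main : ∀ r : ℕ, r < q → r % 2 = 1 → Nat.Coprime r q →
      gG r q = ep q * (jacobiSym r q : ℂ) * (√q : ℝ) := fun r hr hr2 hc =>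
    gG_nat q r hodd hr2 hc (ih r hr q hr2 (by simpa using hc.symm))
  have hq0 : (q : ℤ) ≠ 0 := by omega
  have hn := Int.emod_nonneg p hq0
  have hlt := Int.emod_lt_of_pos p (by omega : (0 : ℤ) < q)
  obtain ⟨s, hs⟩ := Int.eq_ofNat_of_zero_le hn
  have hsc : Nat.Coprime s q := by
    have : (p % q).gcd q = 1 := by
      rw [← hco, Int.gcd_emod]
    rw [hs] at this
    simpa using this
  have hps : p ≡ s [ZMOD q] := by rw [← hs]; exact (Int.mod_modEq _ _).symm
  have hs0 : s ≠ 0 := by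
    rintro rfl
    simp at hsc
    omega
  rcases Nat.mod_two_eq_zero_or_one s with he | ho
  · have hr := main (q - s) (by omega) (by omega)
      ((Nat.coprime_self_sub_left (by omega)).2 hsc)
    have hpr : p ≡ -((q - s : ℕ) : ℤ) [ZMOD q] := by
      refine hps.trans (Int.modEq_iff_dvd.2 ⟨-1, ?_⟩)
      rw [Nat.cast_sub (by omega)]; ring
    rw [gG_congr q _ _ hpr, gG_neg, hr, jacobiSym.mod_left' hpr, jacobiSym.neg _ (Nat.odd_iff.2 hodd)]
    rcases (by omega : q % 4 = 1 ∨ q % 4 = 3) with h | h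
    · simp [ep, h, ZMod.χ₄_nat_one_mod_four h]
    · simp [ep, h, ZMod.χ₄_nat_three_mod_four h]
  · rw [gG_congr q _ _ hps, jacobiSym.mod_left' hps]
    exact main s (by omega) ho hsc

theorem gauss_sum_q_odd (p q : ℕ) (hp : 0 < p) (hq : 0 < q)
    (hco : Nat.Coprime p q) (hodd : q % 2 = 1) :
    ∑ h ∈ Finset.range q, Complex.exp (2 * π * I * p * h ^ 2 / q)
      = (if q % 4 = 1 then (1 : ℂ) else I) * (jacobiSym p q : ℂ) * (Real.sqrt q : ℂ) := by
  have := gG_eq q p hodd (by simpa using hco)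
  rw [ep] at this
  rw [← this, gG]
  refine Finset.sum_congr rfl fun h _ => ?_
  congr 1
  push_cast
  ring
end
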